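/- For every z ∈ ℝ, the function ρ̂ admits the integral representation ρ̂(z) = ∫_ℝ e^{izx} · 2(1 − sin x / x) U(dx), where (1 − sin x / x) is interpreted as 0 at x = 0. In particular, ρ̂ is the Fourier transform of the finite measure ρ(dx) = 2(1 − sin x / x) U(dx). -/

import Mathlib

open MeasureTheory Filter Asymptotics

/-!
Let `D ψ (z) = ∫_{-1}^{1} (ψ(z) − ψ(z + t)) dt`. The operator `D` annihilates linear functions, so
the drift and the choice of the truncation function are invisible to it; it maps `−σ²z²/2` to
`σ²/3`, and it multiplies `e^{izx}` by `2(1 − sin x / x)`. The Lévy condition allows `D` to be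
exchanged with the integral against the Lévy measure.
-/

section Domination

variable {α E : Type*} [MeasurableSpace α] {μ : Measure α} [NormedAddCommGroup E]

/-- `F z` is dominated by one `μ`-integrable function for all `z` in a bounded set. This is the
hypothesis for continuity and for exchange of integrals in `z ↦ ∫ x, F z x ∂μ`. -/
def LocallyDominated (F : ℝ → α → E) (μ : Measure α) : Prop :=
  ∀ r : ℝ, ∃ g : α → ℝ, Integrable g μ ∧ ∀ z x, |z| ≤ r → ‖F z x‖ ≤ g x

theorem LocallyDominated.integrable {F : ℝ → α → E} (hF : LocallyDominated F μ) {z : ℝ}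
    (hF_meas : AEStronglyMeasurable (F z) μ) : Integrable (F z) μ := by
  obtain ⟨g, hg, hFg⟩ := hF |z|
  exact hg.mono' hF_meas (Eventually.of_forall fun x => hFg z x le_rfl)

variable [NormedSpace ℝ E]

theorem LocallyDominated.continuous_integral {F : ℝ → α → E} (hF : LocallyDominated F μ)
    (hF_meas : ∀ z, AEStronglyMeasurable (F z) μ) (hF_cont : ∀ x, Continuous fun z => F z x) :
    Continuous fun z => ∫ x, F z x ∂μ := by
  refine continuous_iff_continuousAt.2 fun z => ?_
  obtain ⟨g, hg, hFg⟩ := hF (|z| + 1)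
  have hnear : ∀ᶠ w in nhds z, |w| ≤ |z| + 1 :=
    continuous_abs.continuousAt.eventually (eventually_le_nhds (lt_add_one |z|))
  exact continuousAt_of_dominated (Eventually.of_forall hF_meas)
    (hnear.mono fun w hw => Eventually.of_forall fun x => hFg w x hw) hg
    (Eventually.of_forall fun x => (hF_cont x).continuousAt)

theorem intervalIntegral_integral_swap_of_norm_le {a b : ℝ} {f : ℝ → α → E} {g : α → ℝ}
    (hf : StronglyMeasurable (Function.uncurry f)) (hg : Integrable g μ)
    (hfg : ∀ t ∈ Set.uIoc a b, ∀ x, ‖f t x‖ ≤ g x) :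
    ∫ t in a..b, ∫ x, f t x ∂μ = ∫ x, (∫ t in a..b, f t x) ∂μ := by
  -- `μ` need not be s-finite, but it is σ-finite on a set off which `g`, hence `f t`, vanishes.
  set S := hg.aefinStronglyMeasurable.sigmaFiniteSet
  have hf_zero : ∀ᵐ x ∂μ, x ∉ S → ∀ t ∈ Set.uIoc a b, f t x = 0 := by
    have hg_zero := (ae_restrict_iff' hg.aefinStronglyMeasurable.measurableSet.compl).1
      hg.aefinStronglyMeasurable.ae_eq_zero_compl
    filter_upwards [hg_zero] with x hx hxS t ht
    exact norm_le_zero_iff.1 ((hfg t ht x).trans_eq (hx hxS))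
  have hf_prod : Integrable (Function.uncurry f)
      ((volume.restrict (Set.uIoc a b)).prod (μ.restrict S)) := by
    have : IsFiniteMeasure (volume.restrict (Set.uIoc a b)) :=
      Real.isFiniteMeasure_restrict_Ioc _ _
    refine (hg.restrict.comp_snd _).mono' hf.aestronglyMeasurable ?_
    have hmem : ∀ᵐ p ∂(volume.restrict (Set.uIoc a b)).prod (μ.restrict S), p.1 ∈ Set.uIoc a b :=
      Measure.quasiMeasurePreserving_fst.ae (ae_restrict_mem measurableSet_uIoc)
    filter_upwards [hmem] with p hp using hfg p.1 hp p.2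
  calc ∫ t in a..b, ∫ x, f t x ∂μ
    _ = ∫ t in a..b, ∫ x in S, f t x ∂μ :=
      intervalIntegral.integral_congr_ae <| Eventually.of_forall fun t ht =>
        (setIntegral_eq_integral_of_ae_compl_eq_zero
          (hf_zero.mono fun x hx hxS => hx hxS t ht)).symm
    _ = ∫ x in S, (∫ t in a..b, f t x) ∂μ := intervalIntegral_integral_swap hf_prod
    _ = ∫ x, (∫ t in a..b, f t x) ∂μ :=
      setIntegral_eq_integral_of_ae_compl_eq_zero <| hf_zero.mono fun x hx hxS =>
        intervalIntegral.integral_zero_ae (Eventually.of_forall (hx hxS))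

end Domination

section IntegralDecrement

variable {E : Type*} [NormedAddCommGroup E] [NormedSpace ℝ E]

/-- The operator `ψ ↦ (z ↦ ∫_{-1}^{1} (ψ(z) − ψ(z + t)) dt)`, which sends the cumulant function of
an infinitely divisible law to `ρ̂ + σ²/3`. -/
noncomputable def integralDecrement (ψ : ℝ → E) (z : ℝ) : E :=
  ∫ t in (-1 : ℝ)..1, (ψ z - ψ (z + t))

theorem integralDecrement_add {φ ψ : ℝ → E} (hφ : Continuous φ) (hψ : Continuous ψ) (z : ℝ) :
    integralDecrement (fun w => φ w + ψ w) z = integralDecrement φ z + integralDecrement ψ z := by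
  simp only [integralDecrement, add_sub_add_comm]
  exact intervalIntegral.integral_add
    (Continuous.intervalIntegrable (by fun_prop) _ _)
    (Continuous.intervalIntegrable (by fun_prop) _ _)

theorem integralDecrement_quadratic (a b : ℂ) (z : ℝ) :
    integralDecrement (fun w : ℝ => a * w + b * (w : ℂ) ^ 2) z = -(2 / 3) * b := by
  have hexpand (t : ℝ) : (a * z + b * (z : ℂ) ^ 2) - (a * ↑(z + t) + b * (↑(z + t) : ℂ) ^ 2) =
      -(a + 2 * b * z) * (t : ℂ) + -b * ((t ^ 2 : ℝ) : ℂ) := by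
    push_cast
    ring
  simp only [integralDecrement, hexpand]
  rw [intervalIntegral.integral_add (Continuous.intervalIntegrable (by fun_prop) _ _)
      (Continuous.intervalIntegrable (by fun_prop) _ _),
    intervalIntegral.integral_const_mul, intervalIntegral.integral_const_mul,
    intervalIntegral.integral_ofReal, intervalIntegral.integral_ofReal, integral_id, integral_pow]
  push_cast
  ring

theorem integralDecrement_integral {α : Type*} [MeasurableSpace α] {μ : Measure α}
    {F : ℝ → α → E} (hF : LocallyDominated F μ)
    (hF_meas : StronglyMeasurable (Function.uncurry F)) (z : ℝ) :
    integralDecrement (fun w => ∫ x, F w x ∂μ) z =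
      ∫ x, integralDecrement (fun w => F w x) z ∂μ := by
  have hF_int (w : ℝ) : Integrable (F w) μ :=
    hF.integrable (hF_meas.comp_measurable measurable_prodMk_left).aestronglyMeasurable
  obtain ⟨g, hg, hFg⟩ := hF (|z| + 1)
  simp only [integralDecrement, ← integral_sub (hF_int _) (hF_int _)]
  refine intervalIntegral_integral_swap_of_norm_le (g := fun x => g x + g x) ?_ (hg.add hg) ?_
  · exact (hF_meas.comp_measurable (by fun_prop : Measurable fun p : ℝ × α => (z, p.2))).sub
      (hF_meas.comp_measurable (by fun_prop : Measurable fun p : ℝ × α => (z + p.1, p.2)))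
  · intro t ht x
    rw [Set.uIoc_of_le (by norm_num)] at ht
    have hzt : |z + t| ≤ |z| + 1 :=
      (abs_add_le z t).trans (by gcongr; exact abs_le.2 ⟨ht.1.le, ht.2⟩)
    exact norm_sub_le_of_le (hFg z x (by linarith)) (hFg (z + t) x hzt)

end IntegralDecrement

section CompensatedExp

open Complex

theorem norm_exp_I_mul_sub_one_sub_le (u : ℝ) : ‖exp (I * u) - 1 - I * u‖ ≤ 2 * u ^ 2 := by
  have hnorm : ‖I * (u : ℂ)‖ = |u| := by simp
  rcases le_total |u| 1 with hu | hu
  · calc ‖exp (I * u) - 1 - I * u‖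
      _ ≤ ‖I * (u : ℂ)‖ ^ 2 := norm_exp_sub_one_sub_id_le (hnorm.trans_le hu)
      _ = u ^ 2 := by rw [hnorm, sq_abs]
      _ ≤ 2 * u ^ 2 := by linarith [sq_nonneg u]
  · calc ‖exp (I * u) - 1 - I * u‖
      _ ≤ |u| + |u| := norm_sub_le_of_le Real.norm_exp_I_mul_ofReal_sub_one_le hnorm.le
      _ ≤ 2 * u ^ 2 := by nlinarith [sq_abs u]

theorem abs_sin_sub_le_sq (x : ℝ) : |Real.sin x - x| ≤ 2 * x ^ 2 := by
  have him : (exp (I * x) - 1 - I * x).im = Real.sin x - x := by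
    simp [mul_comm I, exp_ofReal_mul_I_im]
  exact him ▸ (abs_im_le_norm _).trans (norm_exp_I_mul_sub_one_sub_le x)

/-- The Lévy–Khintchine integrand, with `sin x` in the role of the compensator `x·h(x)`: unlike
`x·h(x)` for a general truncation function `h`, it is continuous. -/
noncomputable def compensatedExp (z x : ℝ) : ℂ :=
  exp (I * z * x) - 1 - I * z * Real.sin x

theorem continuous_uncurry_compensatedExp : Continuous (Function.uncurry compensatedExp) := by
  unfold Function.uncurry compensatedExp
  fun_prop

theorem norm_compensatedExp_le (z x : ℝ) :
    ‖compensatedExp z x‖ ≤ 2 * (1 + |z| + z ^ 2) * min 1 (x ^ 2) := by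
  rcases le_total (x ^ 2) 1 with hx | hx
  · have hsplit : compensatedExp z x = (exp (I * ↑(z * x)) - 1 - I * ↑(z * x)) -
        I * z * ↑(Real.sin x - x) := by
      simp only [compensatedExp]
      push_cast
      ring_nf
    have hlinear : ‖I * (z : ℂ) * ↑(Real.sin x - x)‖ ≤ |z| * (2 * x ^ 2) := by
      rw [norm_mul, norm_mul, norm_I, one_mul, norm_real, norm_real]
      exact mul_le_mul_of_nonneg_left (abs_sin_sub_le_sq x) (abs_nonneg z)
    calc ‖compensatedExp z x‖
      _ ≤ 2 * (z * x) ^ 2 + |z| * (2 * x ^ 2) :=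
        hsplit ▸ norm_sub_le_of_le (norm_exp_I_mul_sub_one_sub_le (z * x)) hlinear
      _ ≤ 2 * (1 + |z| + z ^ 2) * min 1 (x ^ 2) := by
        rw [min_eq_right hx]
        linarith [sq_nonneg x]
  · have hexp : ‖exp (I * z * x)‖ = 1 := by
      rw [mul_assoc, ← ofReal_mul, norm_exp_I_mul_ofReal]
    have hlinear : ‖I * (z : ℂ) * Real.sin x‖ ≤ |z| := by
      rw [norm_mul, norm_mul, norm_I, one_mul, norm_real, norm_real]
      exact mul_le_of_le_one_right (abs_nonneg z) (Real.abs_sin_le_one x)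
    calc ‖compensatedExp z x‖
      _ ≤ 1 + 1 + |z| := norm_sub_le_of_le (norm_sub_le_of_le hexp.le norm_one.le) hlinear
      _ ≤ 2 * (1 + |z| + z ^ 2) * min 1 (x ^ 2) := by
        rw [min_eq_left hx]
        linarith [sq_nonneg z, abs_nonneg z]

theorem integral_exp_I_mul_mul_eq_sinc (x : ℝ) :
    ∫ t in (-1 : ℝ)..1, exp (I * t * x) = 2 * Real.sinc x := by
  rcases eq_or_ne x 0 with rfl | hx
  · norm_num
  have hscale := intervalIntegral.smul_integral_comp_mul_right
    (fun s : ℝ => exp (s * I)) x (a := -1) (b := 1)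
  rw [neg_one_mul, one_mul, integral_exp_mul_I_eq_sinc, real_smul] at hscale
  refine mul_left_cancel₀ (ofReal_ne_zero.2 hx) ?_
  calc (x : ℂ) * ∫ t in (-1 : ℝ)..1, exp (I * t * x)
    _ = x * ∫ t in (-1 : ℝ)..1, exp (↑(t * x) * I) := by
      simp only [ofReal_mul, mul_comm I, mul_right_comm]
    _ = x * (2 * Real.sinc x) := by rw [hscale]; ring

theorem integralDecrement_compensatedExp (z x : ℝ) :
    integralDecrement (fun w => compensatedExp w x) z =
      exp (I * z * x) * (2 * (1 - Real.sinc x) : ℝ) := by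
  have hexpand (t : ℝ) : compensatedExp z x - compensatedExp (z + t) x =
      (exp (I * z * x) - exp (I * z * x) * exp (I * t * x)) + I * Real.sin x * (t : ℂ) := by
    rw [← exp_add]
    simp only [compensatedExp]
    push_cast
    ring_nf
  simp only [integralDecrement, hexpand]
  rw [intervalIntegral.integral_add (Continuous.intervalIntegrable (by fun_prop) _ _)
      (Continuous.intervalIntegrable (by fun_prop) _ _),
    intervalIntegral.integral_sub (Continuous.intervalIntegrable (by fun_prop) _ _)
      (Continuous.intervalIntegrable (by fun_prop) _ _),
    intervalIntegral.integral_const_mul, intervalIntegral.integral_const_mul,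
    integral_exp_I_mul_mul_eq_sinc, intervalIntegral.integral_ofReal,
    intervalIntegral.integral_const, integral_id, real_smul]
  push_cast
  ring

end CompensatedExp

section LevyMeasure

open Complex

variable {U : Measure ℝ}

theorem integrable_min_one_sq (hU : ∫⁻ x, ENNReal.ofReal (min 1 (x ^ 2)) ∂U < ⊤) :
    Integrable (fun x : ℝ => min 1 (x ^ 2)) U :=
  ⟨by fun_prop,
    (hasFiniteIntegral_iff_ofReal (Eventually.of_forall fun x => by positivity)).2 hU⟩

theorem integrable_of_isBigO_sq {E : Type*} [NormedAddCommGroup E] {g : ℝ → E}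
    (hU : Integrable (fun x : ℝ => min 1 (x ^ 2)) U) (hg_meas : AEStronglyMeasurable g U)
    (hg_bdd : ∃ C, ∀ x, ‖g x‖ ≤ C) (hg_zero : g =O[nhds 0] fun x => x ^ 2) :
    Integrable g U := by
  obtain ⟨C, hC⟩ := hg_bdd
  obtain ⟨B, hB_pos, hB⟩ := hg_zero.exists_pos
  obtain ⟨δ, hδ, hnear⟩ := Metric.eventually_nhds_iff.1 hB.bound
  have hC_nonneg : 0 ≤ C := (norm_nonneg _).trans (hC 0)
  refine (hU.const_mul (B + C + C / δ ^ 2)).mono' hg_meas (Eventually.of_forall fun x => ?_)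
  rcases le_total (x ^ 2) 1 with hx | hx
  · rw [min_eq_right hx]
    rcases lt_or_ge |x| δ with hxδ | hxδ
    · calc ‖g x‖
        _ ≤ B * x ^ 2 := by simpa using hnear (y := x) (by simpa using hxδ)
        _ ≤ (B + C + C / δ ^ 2) * x ^ 2 := by
          gcongr
          linarith [show 0 ≤ C / δ ^ 2 by positivity]
    · calc ‖g x‖
        _ ≤ C / δ ^ 2 * δ ^ 2 := by rw [div_mul_cancel₀ _ (by positivity)]; exact hC x
        _ ≤ C / δ ^ 2 * x ^ 2 := by rw [← sq_abs x]; gcongr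
        _ ≤ (B + C + C / δ ^ 2) * x ^ 2 := by gcongr; linarith
  · rw [min_eq_left hx, mul_one]
    linarith [hC x, show 0 ≤ C / δ ^ 2 by positivity]

theorem integrable_sin_sub_mul {h : ℝ → ℝ} (hU : Integrable (fun x : ℝ => min 1 (x ^ 2)) U)
    (h_meas : Measurable h) (h_zero : (fun x => h x - 1) =O[nhds 0] fun x => x)
    (h_bdd : ∃ C, ∀ x, |x * h x| ≤ C) :
    Integrable (fun x => Real.sin x - x * h x) U := by
  refine integrable_of_isBigO_sq hU (by fun_prop) ?_ ?_
  · obtain ⟨C, hC⟩ := h_bdd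
    exact ⟨1 + C, fun x => norm_sub_le_of_le (Real.abs_sin_le_one x) (hC x)⟩
  · have h_sin : (fun x : ℝ => Real.sin x - x) =O[nhds 0] fun x => x ^ 2 :=
      IsBigO.of_bound 2 (Eventually.of_forall fun x => by simpa using abs_sin_sub_le_sq x)
    have h_mul : (fun x => x * (h x - 1)) =O[nhds 0] fun x => x ^ 2 := by
      simpa only [sq] using (isBigO_refl (fun x : ℝ => x) (nhds 0)).mul h_zero
    exact (h_sin.sub h_mul).congr_left fun x => by ring

theorem locallyDominated_compensatedExp (hU : Integrable (fun x : ℝ => min 1 (x ^ 2)) U) :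
    LocallyDominated compensatedExp U := by
  intro r
  refine ⟨_, hU.const_mul (2 * (1 + r + r ^ 2)), fun z x hz => ?_⟩
  refine (norm_compensatedExp_le z x).trans ?_
  rw [← sq_abs z]
  gcongr

theorem continuous_integral_compensatedExp (hU : Integrable (fun x : ℝ => min 1 (x ^ 2)) U) :
    Continuous fun z => ∫ x, compensatedExp z x ∂U :=
  (locallyDominated_compensatedExp hU).continuous_integral
    (fun z => (continuous_uncurry_compensatedExp.uncurry_left z).aestronglyMeasurable)
    (fun x => continuous_uncurry_compensatedExp.uncurry_right x)

theorem integralDecrement_integral_compensatedExp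
    (hU : Integrable (fun x : ℝ => min 1 (x ^ 2)) U) (z : ℝ) :
    integralDecrement (fun w => ∫ x, compensatedExp w x ∂U) z =
      ∫ x, exp (I * z * x) * (2 * (1 - Real.sinc x) : ℝ) ∂U := by
  rw [integralDecrement_integral (locallyDominated_compensatedExp hU)
    continuous_uncurry_compensatedExp.stronglyMeasurable]
  simp only [integralDecrement_compensatedExp]

theorem integral_levyKhintchine_eq_integral_compensatedExp_add {h : ℝ → ℝ}
    (hU : Integrable (fun x : ℝ => min 1 (x ^ 2)) U)
    (hh : Integrable (fun x => Real.sin x - x * h x) U) (z : ℝ) :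
    ∫ x, (exp (I * z * x) - 1 - I * z * x * h x) ∂U =
      (∫ x, compensatedExp z x ∂U) + I * z * ↑(∫ x, (Real.sin x - x * h x) ∂U) := by
  have hK : Integrable (compensatedExp z) U := (locallyDominated_compensatedExp hU).integrable
    (continuous_uncurry_compensatedExp.uncurry_left z).aestronglyMeasurable
  have h_shift : Integrable (fun x => I * z * ↑(Real.sin x - x * h x)) U := hh.ofReal.const_mul _
  rw [← integral_complex_ofReal, ← integral_const_mul, ← integral_add hK h_shift]
  congr with x
  simp only [compensatedExp]
  push_cast
  ring

end LevyMeasure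

theorem two_mul_one_sub_sinc (x : ℝ) :
    2 * (1 - Real.sinc x) = if x = 0 then 0 else 2 * (1 - Real.sin x / x) := by
  rw [Real.sinc_apply]
  split_ifs <;> simp

-- The function in `hh` is the imaginary part of the integrand of `ψ 1`: given `hU`, the hypothesis
-- expresses the convergence of the integrals defining `ψ`.
theorem statement0_general
    (U : Measure ℝ) (hU : Integrable (fun x : ℝ => min 1 (x ^ 2)) U)
    (h : ℝ → ℝ) (hh : Integrable (fun x => Real.sin x - x * h x) U)
    (γ σ : ℝ) (ψ : ℝ → ℂ)
    (hψ : ∀ z : ℝ, ψ z = Complex.I * (γ : ℂ) * (z : ℂ) - (σ : ℂ) ^ 2 * (z : ℂ) ^ 2 / 2 +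
      ∫ x, (Complex.exp (Complex.I * (z : ℂ) * (x : ℂ)) - 1
        - Complex.I * (z : ℂ) * (x : ℂ) * (h x : ℂ)) ∂U)
    (ρhat : ℝ → ℂ)
    (hρ : ∀ z : ℝ, ρhat z = (∫ t in (-1 : ℝ)..1, (ψ z - ψ (z + t))) - (σ : ℂ) ^ 2 / 3) :
    ∀ z : ℝ, ρhat z = ∫ x, Complex.exp (Complex.I * (z : ℂ) * (x : ℂ)) *
      ((if x = 0 then 0 else 2 * (1 - Real.sin x / x) : ℝ) : ℂ) ∂U := by
  intro z
  set m : ℝ := ∫ x, (Real.sin x - x * h x) ∂U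
  have hψ_centred : ψ = fun w : ℝ =>
      (Complex.I * (γ + m) * w + -((σ : ℂ) ^ 2 / 2) * (w : ℂ) ^ 2) +
        ∫ x, compensatedExp w x ∂U := by
    funext w
    rw [hψ, integral_levyKhintchine_eq_integral_compensatedExp_add hU hh]
    ring
  simp only [← two_mul_one_sub_sinc]
  calc ρhat z
    _ = integralDecrement ψ z - (σ : ℂ) ^ 2 / 3 := hρ z
    _ = -(2 / 3) * -((σ : ℂ) ^ 2 / 2) + integralDecrement (fun w => ∫ x, compensatedExp w x ∂U) z -
          (σ : ℂ) ^ 2 / 3 := by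
      rw [hψ_centred, integralDecrement_add (by fun_prop) (continuous_integral_compensatedExp hU),
        integralDecrement_quadratic]
    _ = integralDecrement (fun w => ∫ x, compensatedExp w x ∂U) z := by ring
    _ = ∫ x, Complex.exp (Complex.I * z * x) * (2 * (1 - Real.sinc x) : ℝ) ∂U :=
      integralDecrement_integral_compensatedExp hU z

/-- For a Lévy measure `U`, truncation function `h`, and cumulant
`ψ(z) = iγz − σ²z²/2 + ∫ (e^{izx} − 1 − izx·h(x)) U(dx)`, the function
`ρ̂(z) = ∫_{−1}^{1} (ψ(z) − ψ(z+λ)) dλ − σ²/3` is the Fourier transform of the measure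
`ρ(dx) = 2(1 − sin x / x) U(dx)`, where `1 − sin x / x` is interpreted as `0` at `x = 0`. -/
theorem statement0
    (U : Measure ℝ) (hU0 : U {0} = 0)
    (hUfin : ∫⁻ x, ENNReal.ofReal (min 1 (x ^ 2)) ∂U < ⊤)
    (h : ℝ → ℝ) (hmeas : Measurable h)
    (hbdd : ∃ C, ∀ x, |h x| ≤ C)
    (hsmall : (fun x => h x - 1) =o[nhds (0 : ℝ)] fun x => x)
    (hlarge : h =O[Filter.cocompact ℝ] fun x => x⁻¹)
    (hxh : ∃ C, ∀ x, |x * h x| ≤ C)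
    (γ σ : ℝ) (hσ : 0 ≤ σ)
    (ψ : ℝ → ℂ)
    (hψ : ∀ z : ℝ, ψ z = Complex.I * (γ : ℂ) * (z : ℂ) - (σ : ℂ) ^ 2 * (z : ℂ) ^ 2 / 2 +
      ∫ x, (Complex.exp (Complex.I * (z : ℂ) * (x : ℂ)) - 1
        - Complex.I * (z : ℂ) * (x : ℂ) * (h x : ℂ)) ∂U)
    (ρhat : ℝ → ℂ)
    (hρ : ∀ z : ℝ, ρhat z = (∫ t in (-1 : ℝ)..1, (ψ z - ψ (z + t))) - (σ : ℂ) ^ 2 / 3) :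
    ∀ z : ℝ, ρhat z = ∫ x, Complex.exp (Complex.I * (z : ℂ) * (x : ℂ)) *
      ((if x = 0 then 0 else 2 * (1 - Real.sin x / x) : ℝ) : ℂ) ∂U :=
  statement0_general U (integrable_min_one_sq hUfin) h
    (integrable_sin_sub_mul (integrable_min_one_sq hUfin) hmeas hsmall.isBigO hxh) γ σ ψ hψ ρhat hρ
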